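/- arXiv:math/0509720 — 2 statements merged into one kernel-verified Lean document; each statement's English description precedes it below -/
import Mathlib

section
/- Distribution function of the largest GUE eigenvalue: for every n ≥ 1, t > 0 and a ∈ ℝ, ∫_{{y ∈ W^n : y_n ≤ a}} μ^n_t(y) dy = det{Φ^{(i−j+1)}_t(a); 1 ≤ i,j ≤ n}. -/
open MeasureTheory Real

/-- The centered Gaussian density with variance `t`. -/
noncomputable def gauss (t y : ℝ) : ℝ :=
  (Real.sqrt (2 * Real.pi * t))⁻¹ * Real.exp (-y ^ 2 / (2 * t))

/-- `Φ^{(m)}_t` for `m : ℤ`: for `m ≥ 1` the `m`-th iterated integral of the Gaussian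
density `φ_t`, for `m = 0` the density itself, and for `m ≤ −1` the `(−m)`-th derivative
of `φ_t`. -/
noncomputable def PhiIter (t : ℝ) (m : ℤ) (y : ℝ) : ℝ :=
  if 1 ≤ m then
    ∫ x in Set.Iic y, ((y - x) ^ (m - 1).toNat / (Nat.factorial (m - 1).toNat : ℝ)) * gauss t x
  else iteratedDeriv (-m).toNat (fun z => gauss t z) y

/-- The Vandermonde product `h_m(z) = ∏_{i<j} (z_j − z_i)`. -/
noncomputable def vand (m : ℕ) (z : Fin m → ℝ) : ℝ :=
  ∏ j : Fin m, ∏ i ∈ Finset.Iio j, (z j - z i)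

/-- The normalising constant `Z_m = (2π)^{m/2} ∏_{j=1}^{m−1} j!`. -/
noncomputable def Zconst (m : ℕ) : ℝ :=
  (2 * Real.pi) ^ ((m : ℝ) / 2) * ∏ j ∈ Finset.range m, (Nat.factorial j : ℝ)

/-- The entrance law density `μ^n_t(y) = Z_n^{-1} t^{-n²/2} exp(−Σ_i y_i²/(2t)) h_n(y)²`. -/
noncomputable def muLaw (n : ℕ) (t : ℝ) (y : Fin n → ℝ) : ℝ :=
  (Zconst n)⁻¹ * t ^ (-((n : ℝ) ^ 2) / 2) * Real.exp (-(∑ i, (y i) ^ 2) / (2 * t))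
    * (vand n y) ^ 2

namespace GUEAux

open Polynomial in
/-- Rescaled monic Hermite polynomials. -/
noncomputable def H (t : ℝ) : ℕ → Polynomial ℝ
  | 0 => 1
  | (j + 1) => X * H t j - C t * derivative (H t j)

open Polynomial in
lemma H_prop (t : ℝ) (j : ℕ) : (H t j).natDegree = j ∧ (H t j).Monic := by
  induction j with
  | zero => simp [H]
  | succ j ih =>
    obtain ⟨h1, h2⟩ := ih
    have hm : (X * H t j).Monic := monic_X.mul h2
    have hd : (X * H t j).natDegree = j + 1 := by
      rw [monic_X.natDegree_mul h2, h1, natDegree_X, add_comm]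
    have hlt : (C t * derivative (H t j)).natDegree < j + 1 := by
      refine lt_of_le_of_lt (natDegree_C_mul_le _ _) ?_
      have := natDegree_derivative_le (H t j)
      omega
    have hlt' : (C t * derivative (H t j)).degree < (X * H t j).degree :=
      degree_lt_degree (by rw [hd]; exact hlt)
    refine ⟨?_, ?_⟩
    · rw [H, natDegree_sub_eq_left_of_natDegree_lt (by rw [hd]; exact hlt), hd]
    · exact hm.sub_of_left hlt'

/-- The derivative of the Gaussian density. -/
noncomputable def D (t : ℝ) (j : ℕ) (x : ℝ) : ℝ :=
  (-t⁻¹) ^ j * ((H t j).eval x * gauss t x)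

lemma gauss_deriv (t : ℝ) (ht : 0 < t) (x : ℝ) :
    HasDerivAt (gauss t) (-t⁻¹ * x * gauss t x) x := by
  unfold gauss
  have h : HasDerivAt (fun x : ℝ => -x ^ 2 / (2 * t)) (-(2 * x) / (2 * t)) x := by
    have := ((hasDerivAt_pow 2 x).neg).div_const (2 * t)
    simpa using this
  have := (h.exp).const_mul (Real.sqrt (2 * Real.pi * t))⁻¹
  refine this.congr_deriv ?_
  field_simp

lemma D_deriv (t : ℝ) (ht : 0 < t) (j : ℕ) (x : ℝ) :
    HasDerivAt (D t j) (D t (j + 1) x) x := by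
  unfold D
  have := (((H t j).hasDerivAt x).mul (gauss_deriv t ht x)).const_mul ((-t⁻¹) ^ j)
  refine this.congr_deriv ?_
  simp only [H, Polynomial.eval_sub, Polynomial.eval_mul, Polynomial.eval_X, Polynomial.eval_C]
  have h1 : t⁻¹ * t = 1 := inv_mul_cancel₀ ht.ne'
  rw [pow_succ]
  linear_combination (-(-t⁻¹) ^ j * gauss t x *
    Polynomial.eval x (Polynomial.derivative (H t j))) * h1

lemma iter_eq (t : ℝ) (ht : 0 < t) (j : ℕ) :
    iteratedDeriv j (fun z => gauss t z) = D t j := by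
  induction j with
  | zero => ext x; simp [D, H]
  | succ j ih =>
    rw [iteratedDeriv_succ, ih]
    ext x
    exact (D_deriv t ht j x).deriv

lemma poly_int (t : ℝ) (ht : 0 < t) (p : Polynomial ℝ) :
    Integrable (fun x => p.eval x * gauss t x) := by
  induction p using Polynomial.induction_on' with
  | add p q hp hq =>
    simp only [Polynomial.eval_add, add_mul]
    exact hp.add hq
  | monomial n c =>
    have hb : (0 : ℝ) < (2 * t)⁻¹ := by positivity
    have h := (integrable_rpow_mul_exp_neg_mul_sq hb
      (s := (n : ℝ)) (by have : (0 : ℝ) ≤ n := Nat.cast_nonneg n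
                         linarith)).const_mul (c * (Real.sqrt (2 * Real.pi * t))⁻¹)
    refine h.congr (Filter.Eventually.of_forall fun x => ?_)
    simp only [Polynomial.eval_monomial, gauss, Real.rpow_natCast]
    have : -(2 * t)⁻¹ * x ^ 2 = -x ^ 2 / (2 * t) := by ring
    rw [this]; ring

/-- The monomials around `a`. -/
noncomputable def P (a : ℝ) (i : ℕ) (x : ℝ) : ℝ := (a - x) ^ i / (Nat.factorial i : ℝ)

lemma P_eq (a : ℝ) (i : ℕ) (x : ℝ) :
    P a i x = ((-1) ^ i / (Nat.factorial i : ℝ))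
      * ((Polynomial.X - Polynomial.C a) ^ i).eval x := by
  simp only [P, Polynomial.eval_pow, Polynomial.eval_sub, Polynomial.eval_X, Polynomial.eval_C]
  rw [div_mul_eq_mul_div, ← mul_pow]; congr 2; ring

lemma PD_int (t : ℝ) (ht : 0 < t) (a : ℝ) (i j : ℕ) :
    Integrable (fun x => P a i x * D t j x) := by
  have := (poly_int t ht ((Polynomial.X - Polynomial.C a) ^ i * H t j)).const_mul
    (((-1) ^ i / (Nat.factorial i : ℝ)) * (-t⁻¹) ^ j)
  refine this.congr (Filter.Eventually.of_forall fun x => ?_)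
  simp only [P_eq, D, Polynomial.eval_mul]
  ring

lemma P_deriv (a : ℝ) (i : ℕ) (x : ℝ) : HasDerivAt (P a (i + 1)) (-P a i x) x := by
  unfold P
  have h : HasDerivAt (fun x : ℝ => a - x) (-1) x := by
    simpa using (hasDerivAt_id x).const_sub a
  have := (h.pow (i + 1)).div_const (Nat.factorial (i + 1) : ℝ)
  refine this.congr_deriv ?_
  have h0 : (Nat.factorial i : ℝ) ≠ 0 := by positivity
  rw [Nat.factorial_succ]
  push_cast
  field_simp

lemma I_zero (t : ℝ) (ht : 0 < t) (a : ℝ) (j : ℕ) :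
    ∫ x in Set.Iic a, P a 0 x * D t (j + 1) x = D t j a := by
  have e : ∀ k x, P a 0 x * D t k x = D t k x := by intro k x; simp [P]
  have i1 := PD_int t ht a 0 (j + 1)
  have i0 := PD_int t ht a 0 j
  simp only [e] at i1 i0 ⊢
  have := integral_Iic_of_hasDerivAt_of_tendsto (a := a)
    ((D_deriv t ht j a).continuousAt.continuousWithinAt)
    (fun x _ => D_deriv t ht j x) i1.integrableOn
    (tendsto_zero_of_hasDerivAt_of_integrableOn_Iic (a := a) (fun x _ => D_deriv t ht j x)
      i1.integrableOn i0.integrableOn)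
  simpa using this

lemma I_succ (t : ℝ) (ht : 0 < t) (a : ℝ) (i j : ℕ) :
    ∫ x in Set.Iic a, P a (i + 1) x * D t (j + 1) x = ∫ x in Set.Iic a, P a i x * D t j x := by
  have i1 := PD_int t ht a (i + 1) (j + 1)
  have i0 := PD_int t ht a i j
  have i2 := PD_int t ht a (i + 1) j
  have hd : ∀ x, HasDerivAt (fun x => P a (i + 1) x * D t j x)
      (P a (i + 1) x * D t (j + 1) x - P a i x * D t j x) x := by
    intro x
    refine ((P_deriv a i x).mul (D_deriv t ht j x)).congr_deriv ?_
    ring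
  have := integral_Iic_of_hasDerivAt_of_tendsto (a := a)
    ((hd a).continuousAt.continuousWithinAt)
    (fun x _ => hd x) (i1.sub i0).integrableOn
    (tendsto_zero_of_hasDerivAt_of_integrableOn_Iic (a := a) (fun x _ => hd x)
      (i1.sub i0).integrableOn i2.integrableOn)
  rw [integral_sub i1.integrableOn i0.integrableOn] at this
  have hz : P a (i + 1) a = 0 := by simp [P]
  rw [hz] at this
  linarith

lemma I_eq (t : ℝ) (ht : 0 < t) (a : ℝ) (i j : ℕ) :
    PhiIter t ((i : ℤ) - (j : ℤ) + 1) a = ∫ x in Set.Iic a, P a i x * D t j x := by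
  induction j generalizing i with
  | zero =>
    have h : (1 : ℤ) ≤ (i : ℤ) - ((0 : ℕ) : ℤ) + 1 := by omega
    have h2 : ((i : ℤ) - ((0 : ℕ) : ℤ) + 1 - 1).toNat = i := by omega
    rw [PhiIter, if_pos h, h2]
    simp [P, D, H]
  | succ j ih =>
    cases i with
    | zero =>
      rw [I_zero t ht]
      have h : ¬ (1 : ℤ) ≤ ((0 : ℕ) : ℤ) - ((j + 1 : ℕ) : ℤ) + 1 := by omega
      have h2 : (-(((0 : ℕ) : ℤ) - ((j + 1 : ℕ) : ℤ) + 1)).toNat = j := by omega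
      rw [PhiIter, if_neg h, h2, iter_eq t ht]
    | succ i =>
      rw [I_succ t ht, ← ih]
      congr 1
      push_cast
      ring

lemma andreief (n : ℕ) (ν : Measure ℝ) [SigmaFinite ν] (p q : Fin n → ℝ → ℝ)
    (h : ∀ i j, Integrable (fun x => p i x * q j x) ν) :
    Integrable (fun y : Fin n → ℝ => (Matrix.of fun i k => p i (y k)).det
        * (Matrix.of fun i k => q i (y k)).det) (Measure.pi fun _ => ν) ∧
    ∫ y : Fin n → ℝ, (Matrix.of fun i k => p i (y k)).det
        * (Matrix.of fun i k => q i (y k)).det ∂(Measure.pi fun _ => ν)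
      = (Nat.factorial n : ℝ) * (Matrix.of fun i j => ∫ x, p i x * q j x ∂ν).det := by
  have e : (fun y : Fin n → ℝ => (Matrix.of fun i k => p i (y k)).det
        * (Matrix.of fun i k => q i (y k)).det) = fun y => ∑ τ : Equiv.Perm (Fin n),
        ∑ σ : Equiv.Perm (Fin n), (((Equiv.Perm.sign τ : ℤ) : ℝ) * ((Equiv.Perm.sign σ : ℤ) : ℝ)) *
          ∏ k, (p (σ k) (y k) * q (τ k) (y k)) := by
    ext y
    rw [Matrix.det_apply', Matrix.det_apply', Finset.sum_mul_sum, Finset.sum_comm]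
    refine Finset.sum_congr rfl fun τ _ => Finset.sum_congr rfl fun σ _ => ?_
    simp only [Matrix.of_apply, Finset.prod_mul_distrib]
    ring
  have hint : ∀ τ σ : Equiv.Perm (Fin n), Integrable (fun y : Fin n → ℝ =>
      (((Equiv.Perm.sign τ : ℤ) : ℝ) * ((Equiv.Perm.sign σ : ℤ) : ℝ)) *
          ∏ k, (p (σ k) (y k) * q (τ k) (y k))) (Measure.pi fun _ => ν) := by
    intro τ σ
    exact (Integrable.fintype_prod (f := fun k x => p (σ k) x * q (τ k) x)
      (fun k => h _ _)).const_mul _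
  rw [e]
  refine ⟨integrable_finsetSum _ fun τ _ => integrable_finsetSum _ fun σ _ => hint τ σ, ?_⟩
  rw [integral_finsetSum _ fun τ _ => integrable_finsetSum _ fun σ _ => hint τ σ]
  set M : Matrix (Fin n) (Fin n) ℝ := Matrix.of fun i j => ∫ x, p i x * q j x ∂ν with hM
  have : ∀ τ : Equiv.Perm (Fin n), ∫ y : Fin n → ℝ, ∑ σ : Equiv.Perm (Fin n),
      (((Equiv.Perm.sign τ : ℤ) : ℝ) * ((Equiv.Perm.sign σ : ℤ) : ℝ)) *
          ∏ k, (p (σ k) (y k) * q (τ k) (y k)) ∂(Measure.pi fun _ => ν) = M.det := by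
    intro τ
    rw [integral_finsetSum _ fun σ _ => hint τ σ]
    have h1 := Matrix.det_permute' τ M
    have h2 : ((Equiv.Perm.sign τ : ℤ) : ℝ) * ((Equiv.Perm.sign τ : ℤ) : ℝ) = 1 := by
      rw [← Int.cast_mul, ← Units.val_mul, Int.units_mul_self]; simp
    calc _ = ((Equiv.Perm.sign τ : ℤ) : ℝ) * (M.submatrix id ⇑τ).det := by
          rw [Matrix.det_apply', Finset.mul_sum]
          refine Finset.sum_congr rfl fun σ _ => ?_
          rw [integral_const_mul, mul_assoc,
            integral_fintype_prod_eq_prod (fun k x => p (σ k) x * q (τ k) x)]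
          rfl
      _ = M.det := by rw [h1, ← mul_assoc, h2, one_mul]
  rw [Finset.sum_congr rfl fun τ _ => this τ]
  simp [Fintype.card_perm]

lemma ae_inj (n : ℕ) : ∀ᵐ y : Fin n → ℝ, Function.Injective y := by
  have : ∀ i j : Fin n, i ≠ j → ∀ᵐ y : Fin n → ℝ, y i ≠ y j := by
    intro i j hij
    let s : Submodule ℝ (Fin n → ℝ) :=
      LinearMap.ker (LinearMap.proj (R := ℝ) (φ := fun _ : Fin n => ℝ) i - LinearMap.proj j)
    have hs : s ≠ ⊤ := by
      intro h
      have : (Pi.single i 1 : Fin n → ℝ) ∈ s := by rw [h]; trivial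
      simp [s, LinearMap.mem_ker, Pi.single_apply, hij.symm] at this
    have h0 := Measure.addHaar_submodule volume s hs
    rw [ae_iff]
    convert h0 using 2
    ext y
    simp [s, LinearMap.mem_ker, sub_eq_zero]
  have h2 : ∀ᵐ y : Fin n → ℝ, ∀ i j : Fin n, i ≠ j → y i ≠ y j := by
    rw [ae_all_iff]; intro i
    rw [ae_all_iff]; intro j
    by_cases hij : i = j
    · simp [hij]
    · simpa [hij] using this i j hij
  filter_upwards [h2] with y hy i j hij
  by_contra hne
  exact hy i j hne hij

lemma meas_mono (n : ℕ) : MeasurableSet {y : Fin n → ℝ | Monotone y} :=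
  isClosed_monotone.measurableSet

lemma symm_int (n : ℕ) (ν : Measure ℝ) [SigmaFinite ν] (F : (Fin n → ℝ) → ℝ)
    (hF : Integrable F (Measure.pi fun _ => ν))
    (hinj : ∀ᵐ y : Fin n → ℝ ∂(Measure.pi fun _ => ν), Function.Injective y)
    (hs : ∀ (σ : Equiv.Perm (Fin n)) y, F (y ∘ σ) = F y) :
    ∫ y, F y ∂(Measure.pi fun _ => ν)
      = (Nat.factorial n : ℝ) * ∫ y in {y | Monotone y}, F y ∂(Measure.pi fun _ => ν) := by
  set μ := (Measure.pi fun _ : Fin n => ν) with hμ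
  set G : (Fin n → ℝ) → ℝ := Set.indicator {y | Monotone y} F with hG
  have hGi : Integrable G μ := hF.indicator (meas_mono n)
  have hmp : ∀ σ : Equiv.Perm (Fin n),
      MeasurePreserving (MeasurableEquiv.piCongrLeft (fun _ : Fin n => ℝ) σ.symm) μ μ :=
    fun σ => measurePreserving_piCongrLeft (fun _ : Fin n => ν) σ.symm
  have hap : ∀ (σ : Equiv.Perm (Fin n)) (y : Fin n → ℝ),
      MeasurableEquiv.piCongrLeft (fun _ : Fin n => ℝ) σ.symm y = y ∘ σ := by
    intro σ y
    ext k
    have := MeasurableEquiv.piCongrLeft_apply_apply (β := fun _ : Fin n => ℝ) σ.symm y (σ k)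
    simpa using this
  have hI : ∀ σ : Equiv.Perm (Fin n), Integrable (fun y => G (y ∘ σ)) μ := by
    intro σ
    have := (hmp σ).integrable_comp_of_integrable hGi
    simpa only [Function.comp_def, hap] using this
  have hE : ∀ σ : Equiv.Perm (Fin n), ∫ y, G (y ∘ σ) ∂μ = ∫ y, G y ∂μ := by
    intro σ
    have := (hmp σ).integral_comp' G
    simpa only [hap] using this
  have key : ∀ᵐ y ∂μ, F y = ∑ σ : Equiv.Perm (Fin n), G (y ∘ σ) := by
    filter_upwards [hinj] with y hy
    rw [Finset.sum_eq_single (Tuple.sort y)]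
    · rw [hG, Set.indicator_of_mem (Tuple.monotone_sort y), hs]
    · intro σ _ hσ
      rw [hG, Set.indicator_of_notMem]
      intro hm
      apply hσ
      have := Tuple.unique_monotone hm (Tuple.monotone_sort y)
      ext k
      exact congrArg Fin.val (hy (congrFun this k))
    · simp
  rw [integral_congr_ae key, integral_finsetSum _ fun σ _ => hI σ,
    Finset.sum_congr rfl fun σ _ => hE σ, hG, integral_indicator (meas_mono n)]
  simp [Fintype.card_perm]

lemma det_vand (n : ℕ) (y : Fin n → ℝ) : (Matrix.vandermonde y).det = vand n y := by
  rw [Matrix.det_vandermonde, vand]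
  refine Finset.prod_comm' ?_
  intro x y
  simp

lemma det_poly (n : ℕ) (y : Fin n → ℝ) (p : ℕ → Polynomial ℝ)
    (hp : ∀ i, (p i).natDegree = i ∧ (p i).Monic) :
    (Matrix.of fun i k : Fin n => (p i).eval (y k)).det = vand n y := by
  rw [← det_vand, Matrix.det_eval_matrixOfPolynomials_eq_det_vandermonde y (fun i => p i)
    (fun i => (hp i).1) (fun i => (hp i).2), ← Matrix.det_transpose]
  rfl

lemma det_P (n : ℕ) (a : ℝ) (y : Fin n → ℝ) :
    (Matrix.of fun i k : Fin n => P a i (y k)).det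
      = (∏ i : Fin n, ((-1) ^ (i : ℕ) / (Nat.factorial i : ℝ))) * vand n y := by
  have hp : ∀ i : ℕ, ((Polynomial.X - Polynomial.C a) ^ i).natDegree = i ∧
      ((Polynomial.X - Polynomial.C a) ^ i).Monic := fun i =>
    ⟨by rw [(Polynomial.monic_X_sub_C a).natDegree_pow]; simp, (Polynomial.monic_X_sub_C a).pow i⟩
  rw [← det_poly n y _ hp, ← Matrix.det_mul_column]
  simp only [P_eq, Matrix.of_apply]

lemma det_D (n : ℕ) (t : ℝ) (y : Fin n → ℝ) :
    (Matrix.of fun i k : Fin n => D t i (y k)).det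
      = (∏ i : Fin n, (-t⁻¹) ^ (i : ℕ)) * ((∏ k, gauss t (y k)) * vand n y) := by
  rw [← det_poly n y _ (H_prop t), ← Matrix.det_mul_row, ← Matrix.det_mul_column]
  simp only [D, Matrix.of_apply]
  congr 2; ext i k; ring

lemma const_eq (n : ℕ) (t : ℝ) (ht : 0 < t) :
    (Zconst n)⁻¹ * t ^ (-((n : ℝ) ^ 2) / 2) =
      ∏ i ∈ Finset.range n, ((t⁻¹) ^ i / (Nat.factorial i : ℝ) * (Real.sqrt (2 * Real.pi * t))⁻¹) := by
  induction n with
  | zero => simp [Zconst]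
  | succ n ih =>
    rw [Finset.prod_range_succ, ← ih, Zconst, Zconst, Finset.prod_range_succ]
    have hpi : (0 : ℝ) < 2 * Real.pi := by positivity
    have e1 : (2 * Real.pi) ^ (((n + 1 : ℕ) : ℝ) / 2)
        = (2 * Real.pi) ^ ((n : ℝ) / 2) * Real.sqrt (2 * Real.pi) := by
      rw [Real.sqrt_eq_rpow, ← Real.rpow_add hpi]; congr 1; push_cast; ring
    have e2 : t ^ (-(((n + 1 : ℕ) : ℝ) ^ 2) / 2)
        = t ^ (-((n : ℝ) ^ 2) / 2) * ((t⁻¹) ^ n * (Real.sqrt t)⁻¹) := by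
      rw [Real.sqrt_eq_rpow, inv_pow, ← Real.rpow_natCast t n, ← Real.rpow_neg ht.le,
        ← Real.rpow_neg ht.le, ← Real.rpow_add ht, ← Real.rpow_add ht]
      congr 1; push_cast; ring
    rw [e1, e2, Real.sqrt_mul hpi.le]
    simp only [mul_inv, div_eq_mul_inv]
    ring

lemma mu_eq (n : ℕ) (t : ℝ) (ht : 0 < t) (a : ℝ) (y : Fin n → ℝ) :
    muLaw n t y = (Matrix.of fun i k : Fin n => P a i (y k)).det
        * (Matrix.of fun i k : Fin n => D t i (y k)).det := by
  rw [det_P, det_D, muLaw, const_eq n t ht,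
    ← Fin.prod_univ_eq_prod_range
      (fun i => (t⁻¹) ^ i / (Nat.factorial i : ℝ) * (Real.sqrt (2 * Real.pi * t))⁻¹)]
  have e : Real.exp (-(∑ i, (y i) ^ 2) / (2 * t)) = ∏ i, Real.exp (-(y i) ^ 2 / (2 * t)) := by
    rw [← Real.exp_sum, ← Finset.sum_div, Finset.sum_neg_distrib]
  have e2 : (∏ i : Fin n, ((t⁻¹) ^ (i : ℕ) / (Nat.factorial i : ℝ) *
        (Real.sqrt (2 * Real.pi * t))⁻¹)) * ∏ i, Real.exp (-(y i) ^ 2 / (2 * t))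
      = (∏ i : Fin n, ((-1) ^ (i : ℕ) / (Nat.factorial i : ℝ))) *
        ((∏ i : Fin n, (-t⁻¹) ^ (i : ℕ)) * (∏ k, gauss t (y k))) := by
    rw [← Finset.prod_mul_distrib, ← Finset.prod_mul_distrib, ← Finset.prod_mul_distrib]
    refine Finset.prod_congr rfl fun i _ => ?_
    have : (t⁻¹) ^ (i : ℕ) = (-1) ^ (i : ℕ) * (-t⁻¹) ^ (i : ℕ) := by
      rw [← mul_pow]; simp
    rw [this, gauss]; ring
  rw [e, e2]; ring

lemma mu_symm (n : ℕ) (t : ℝ) (ht : 0 < t) (σ : Equiv.Perm (Fin n)) (y : Fin n → ℝ) :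
    muLaw n t (y ∘ σ) = muLaw n t y := by
  have h1 : (vand n (y ∘ σ)) ^ 2 = (vand n y) ^ 2 := by
    rw [← det_vand, ← det_vand]
    have : Matrix.vandermonde (y ∘ σ) = (Matrix.vandermonde y).submatrix σ id := rfl
    rw [this, Matrix.det_permute, mul_pow, ← Int.cast_pow, ← Units.val_pow_eq_pow_val,
      Int.units_sq]
    simp
  have h2 : ∑ i, ((y ∘ σ) i) ^ 2 = ∑ i, (y i) ^ 2 := Equiv.sum_comp σ (fun i => (y i) ^ 2)
  rw [muLaw, muLaw, h1, h2]

end GUEAux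

open GUEAux in
/-- Distribution function of the largest GUE eigenvalue:
`∫_{y ∈ W^n, y_n ≤ a} μ^n_t(y) dy = det{Φ^{(i−j+1)}_t(a)}`. -/
theorem stmt17 (n : ℕ) (hn : 1 ≤ n) (t : ℝ) (ht : 0 < t) (a : ℝ) :
    (∫ y in {y : Fin n → ℝ | Monotone y ∧ y ⟨n - 1, by omega⟩ ≤ a}, muLaw n t y)
      = Matrix.det (Matrix.of fun i j : Fin n => PhiIter t ((i : ℤ) - (j : ℤ) + 1) a) := by
  have hset : {y : Fin n → ℝ | Monotone y ∧ y ⟨n - 1, by omega⟩ ≤ a}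
      = {y | Monotone y} ∩ Set.univ.pi (fun _ => Set.Iic a) := by
    ext y
    simp only [Set.mem_setOf_eq, Set.mem_inter_iff, Set.mem_pi, Set.mem_univ, Set.mem_Iic,
      true_implies]
    refine and_congr_right fun hm => ⟨fun h i => le_trans (hm ?_) h, fun h => h _⟩
    rw [Fin.le_def]; simp only; omega
  have hr : (volume : Measure (Fin n → ℝ)).restrict (Set.univ.pi (fun _ => Set.Iic a))
      = Measure.pi fun _ => (volume : Measure ℝ).restrict (Set.Iic a) := by
    rw [volume_pi, Measure.restrict_pi_pi]
  rw [hset, ← Measure.restrict_restrict (meas_mono n), hr]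
  have hA := andreief n ((volume : Measure ℝ).restrict (Set.Iic a)) (fun i => P a i)
    (fun j => D t j) (fun i j => (PD_int t ht a i j).integrableOn)
  simp only [← mu_eq n t ht a] at hA
  have hS := symm_int n ((volume : Measure ℝ).restrict (Set.Iic a)) (muLaw n t) hA.1
    (by rw [← hr]; exact ae_restrict_of_ae (ae_inj n)) (mu_symm n t ht)
  rw [hA.2] at hS
  have hf : (Nat.factorial n : ℝ) ≠ 0 := by positivity
  rw [← mul_left_cancel₀ hf hS]
  simp only [I_eq t ht]
end

section
/- Integrated Karlin–McGregor identity: let n ≥ 1, t > 0, z ∈ W^n and z' ∈ W^n, and set z'_0 = −∞. Let R = {u ∈ ℝ^n : z'_{j−1} < u_j ≤ z'_j for each j = 1,…,n}. Then ∫_R det{φ_t(u_j − z_i); 1 ≤ i,j ≤ n} du = det{Φ_t(z'_j − z_i); 1 ≤ i,j ≤ n}. -/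
open MeasureTheory Real

/-- The Gaussian cumulative distribution function `Φ_t`. -/
noncomputable def gaussCDF (t y : ℝ) : ℝ := ∫ z in Set.Iic y, gauss t z

lemma gauss_integrable (t : ℝ) (ht : 0 < t) : Integrable (gauss t) := by
  have h := (integrable_exp_neg_mul_sq (b := 1 / (2 * t)) (by positivity)).const_mul
    (Real.sqrt (2 * Real.pi * t))⁻¹
  refine h.congr (Filter.Eventually.of_forall fun x => ?_)
  simp only [gauss]
  congr 2
  ring

lemma gaussCDF_shift (t a b : ℝ) :
    gaussCDF t (b - a) = ∫ x in Set.Iic b, gauss t (x - a) := by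
  have h := (measurePreserving_sub_right volume a).setIntegral_preimage_emb
    (MeasurableEquiv.subRight a).measurableEmbedding (gauss t) (Set.Iic (b - a))
  rw [gaussCDF, ← h]
  congr 2
  ext x
  simp

lemma box_integral (n : ℕ) (f : Fin n → ℝ → ℝ) (hf : ∀ i, Integrable (f i))
    (s : Fin n → Set ℝ) :
    (∫ u in Set.univ.pi s, Matrix.det (Matrix.of fun i j : Fin n => f i (u j)))
      = Matrix.det (Matrix.of fun i j : Fin n => ∫ x in s j, f i x) := by
  rw [volume_pi, Measure.restrict_pi_pi]
  simp only [Matrix.det_apply', Matrix.of_apply]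
  rw [integral_finsetSum]
  · refine Finset.sum_congr rfl fun σ _ => ?_
    rw [integral_const_mul]
    congr 1
    exact integral_fintype_prod_eq_prod (𝕜 := ℝ) (fun i x => f (σ i) x)
  · intro σ _
    refine Integrable.const_mul ?_ _
    exact Integrable.fintype_prod (f := fun i x => f (σ i) x) fun i => (hf (σ i)).restrict



/-- Integrated Karlin–McGregor identity: integrating `det{φ_t(u_j − z_i)}` over the box
`R = {u : z'_{j−1} < u_j ≤ z'_j}` (with `z'_0 = −∞`) gives `det{Φ_t(z'_j − z_i)}`. -/
theorem stmt19 (n : ℕ) (hn : 1 ≤ n) (t : ℝ) (ht : 0 < t)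
    (z z' : Fin n → ℝ) (hz : Monotone z) (hz' : Monotone z') :
    (∫ u in {u : Fin n → ℝ | ∀ j : Fin n,
        u j ≤ z' j ∧ ∀ h : 0 < (j : ℕ), z' ⟨(j : ℕ) - 1, by omega⟩ < u j},
      Matrix.det (Matrix.of fun i j : Fin n => gauss t (u j - z i)))
      = Matrix.det (Matrix.of fun i j : Fin n => gaussCDF t (z' j - z i)) := by
  have hset : {u : Fin n → ℝ | ∀ j : Fin n,
        u j ≤ z' j ∧ ∀ h : 0 < (j : ℕ), z' ⟨(j : ℕ) - 1, by omega⟩ < u j}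
      = Set.univ.pi fun j : Fin n => {x : ℝ | x ≤ z' j ∧
        ∀ h : 0 < (j : ℕ), z' ⟨(j : ℕ) - 1, by omega⟩ < x} := by
    ext u
    simp [Set.mem_pi]
  have hint : ∀ i, Integrable (fun x => gauss t (x - z i)) := fun i =>
    (gauss_integrable t ht).comp_sub_right (z i)
  rw [hset, box_integral n (fun i x => gauss t (x - z i)) hint]
  obtain ⟨m, rfl⟩ : ∃ m, n = m + 1 := ⟨n - 1, by omega⟩
  symm
  apply Matrix.det_eq_of_forall_col_eq_smul_add_pred (fun _ => 1)
  · intro i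
    simp only [Matrix.of_apply, gaussCDF_shift]
    congr 2
    ext x
    simp
  · intro i j
    simp only [Matrix.of_apply, gaussCDF_shift, one_mul]
    have hs : {x : ℝ | x ≤ z' j.succ ∧ ∀ h : 0 < (j.succ : ℕ),
        z' ⟨(j.succ : ℕ) - 1, by omega⟩ < x} = Set.Ioc (z' j.castSucc) (z' j.succ) := by
      ext x
      have : (⟨(j.succ : ℕ) - 1, by omega⟩ : Fin (m + 1)) = j.castSucc := by
        ext; simp
      simp only [this, Set.mem_ofPred_eq, Set.mem_Ioc, Fin.val_succ]
      constructor
      · rintro ⟨h1, h2⟩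
        exact ⟨h2 (by omega), h1⟩
      · rintro ⟨h1, h2⟩
        exact ⟨h2, fun _ => h1⟩
    rw [hs, add_comm, ← setIntegral_union _ measurableSet_Ioc (hint i).integrableOn
      (hint i).integrableOn, Set.Iic_union_Ioc_eq_Iic (hz' (Fin.castSucc_le_succ j))]
    rw [Set.disjoint_left]
    intro x hx hx'
    exact absurd hx'.1 (not_lt.mpr hx)
end
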